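/- (Lemma "miSameAsvi" of the paper.) Under the stated hypotheses, for every i with 1 ≤ i ≤ 5 one has Mᵢ ∩ S = Iᵢ; that is, an element of S expressible as an S-linear combination s₀·2 + s₁'·m₁ + ⋯ + s_{i−1}'·m_{i−1} with s₀, s₁', …, s_{i−1}' ∈ S lies in the ideal (2, v₁, …, v_{i−1}) of S, and conversely every element of (2, v₁, …, v_{i−1}) lies in Mᵢ. -/

import Mathlib

/-!
The relations `mₖ - γ mₖ = aₖ` and `γ² mₖ = -mₖ` give `2 mₖ = aₖ + γ aₖ`, so inductively
`2ᵏ mₖ = wₖ` lies in `S`, with `w₁ = r₁ + s₁` and, for `k ≥ 2`,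
`wₖ ≡ wₖ₋₁ (r₁ⁿ - s₁ⁿ) mod 2` for `n = 2ᵏ⁻¹`. As `2` is a prime
of `S` that does not divide `r₁ⁿ - s₁ⁿ`, it does not divide `wₖ` (`not_dvd_step`).

The equality `Mₖ ∩ S = Iₖ` passes to `Mₖ₊₁ ∩ S = Iₖ₊₁` as follows (`Good.step`). If
`x = s mₖ + y` with `x, s ∈ S` and `y ∈ Mₖ`, multiplying by `2ᵏ`, which sends `Mₖ` into `2S`, shows
that `2 ∣ s wₖ`, hence `s = 2t`. The 2-series relation together with `2ᵏ mₖ ∈ S` and `2ᵏ > k` gives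
`vₖ - 2 mₖ ∈ Mₖ`, so `x - t vₖ ∈ Mₖ ∩ S = Iₖ`.
-/

noncomputable section

open MvPolynomial

instance : (Ideal.span {(2 : ℤ)}).IsPrime :=
  (Ideal.span_singleton_prime (by norm_num)).mpr Int.prime_two

/-- `ℤ₍₂₎`, the localization of `ℤ` at the prime ideal `(2)`. -/
abbrev Zloc : Type := Localization.AtPrime (Ideal.span {(2 : ℤ)})

/-- `S = ℤ₍₂₎[r₁, s₁, r₃, s₃]`, the polynomial ring in four variables over `ℤ₍₂₎`. -/
abbrev S : Type := MvPolynomial (Fin 4) Zloc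

/-- The generator `r₁`. -/
def r1 : S := X 0
/-- The generator `s₁` (playing the role of `γr̄₁`). -/
def s1 : S := X 1
/-- The generator `r₃`. -/
def r3 : S := X 2
/-- The generator `s₃` (playing the role of `γr̄₃`). -/
def s3 : S := X 3

/-- `S[1/2]`, the localization of `S` away from `2`. -/
abbrev S2 : Type := Localization.Away (2 : S)

/-- The canonical map `S → S[1/2]`. -/
def ι : S →+* S2 := algebraMap S S2

lemma two_prime : Prime (2 : S) := by
  have h : Prime (2 : Zloc) := by
    have h0 : (2 : Zloc) ≠ 0 := by
      have : (algebraMap ℤ Zloc) 2 ≠ (algebraMap ℤ Zloc) 0 := fun h =>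
        absurd (IsLocalization.injective Zloc
          (Ideal.primeCompl_le_nonZeroDivisors (Ideal.span {(2 : ℤ)})) h) (by norm_num)
      simpa using this
    have h1 := IsLocalization.AtPrime.map_eq_maximalIdeal (Ideal.span {(2 : ℤ)}) Zloc
    rw [Ideal.map_span, Set.image_singleton, map_ofNat] at h1
    rw [← Ideal.span_singleton_prime h0, h1]
    infer_instance
  have h2 := (MvPolynomial.prime_C_iff (Fin 4)).mpr h
  rwa [map_ofNat] at h2

lemma not_dvd_e : ¬ (2 : S) ∣ r1 + s1 := by
  intro h
  have h2 : (C (2 : Zloc) : S) ∣ r1 + s1 := by rwa [map_ofNat]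
  rw [MvPolynomial.C_dvd_iff_dvd_coeff] at h2
  have h3 := h2 (Finsupp.single 0 1)
  have h4 : coeff (Finsupp.single 0 1) (r1 + s1) = (1 : Zloc) := by
    simp [r1, s1, coeff_X, Finsupp.single_left_inj]
  rw [h4] at h3
  have h5 : (C (2 : Zloc) : S) ∣ C 1 := map_dvd C h3
  rw [map_ofNat, map_one] at h5
  exact two_prime.not_dvd_one h5

lemma not_dvd_double {a b : S} (h : ¬ (2 : S) ∣ a - b) : ¬ (2 : S) ∣ a ^ 2 - b ^ 2 := by
  intro h2
  apply h
  apply two_prime.dvd_of_dvd_pow (n := 2)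
  have : (a - b) ^ 2 = (a ^ 2 - b ^ 2) + 2 * (b ^ 2 - a * b) := by ring
  rw [this]
  exact dvd_add h2 (Dvd.intro _ rfl)

lemma not_dvd_step {w a b w' : S} (hw : ¬ (2 : S) ∣ w) (h : ¬ (2 : S) ∣ a - b) (q : S)
    (hw' : w' = w * (a - b) + 2 * q) : ¬ (2 : S) ∣ w' := by
  rw [hw']
  intro h2
  rw [dvd_add_left (Dvd.intro _ rfl)] at h2
  exact (two_prime.dvd_or_dvd h2).elim hw h

lemma ι_inj : Function.Injective ι :=
  IsLocalization.injective S2 (powers_le_nonZeroDivisors_of_noZeroDivisors two_prime.ne_zero)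

lemma smul_eq (s : S) (y : S2) : s • y = ι s * y := Algebra.smul_def s y

/-- The invariant of the induction on `k`: the submodule `N` of `S[1/2]` meets `S` in the ideal `I`,
and `2ᵏ N ⊆ 2 S`. -/
structure Good (k : ℕ) (N : Submodule S S2) (I : Ideal S) : Prop where
  mem_iff : ∀ x, ι x ∈ N ↔ x ∈ I
  denom : ∀ y ∈ N, ∃ z : S, 2 ^ k * y = ι (2 * z)

lemma Good.base : Good 1 (Submodule.span S {2}) (Ideal.span {2}) where
  mem_iff x := by
    rw [Submodule.mem_span_singleton, Ideal.mem_span_singleton']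
    refine exists_congr fun a => ?_
    rw [smul_eq, ← ι_inj.eq_iff, map_mul, map_ofNat]
  denom y hy := by
    obtain ⟨a, rfl⟩ := Submodule.mem_span_singleton.mp hy
    refine ⟨2 * a, ?_⟩
    rw [smul_eq]
    simp only [map_mul, map_ofNat]
    ring

/-- One step of the induction: adjoin `m`, with denominator exactly `2ᵏ⁺¹`, to the submodule spanned by
`A`, and `v` to the ideal spanned by `B`. -/
lemma Good.step {k : ℕ} {A : Set S2} {B : Set S}
    (h : Good (k + 1) (Submodule.span S A) (Ideal.span B)) {m : S2} {w v : S}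
    (hm : 2 ^ (k + 1) * m = ι w) (hw : ¬ (2 : S) ∣ w) (hv : ι v - 2 * m ∈ Submodule.span S A) :
    Good (k + 2) (Submodule.span S (insert m A)) (Ideal.span (insert v B)) where
  mem_iff x := by
    rw [Submodule.mem_span_insert, Ideal.mem_span_insert]
    constructor
    · rintro ⟨s, y, hy, hx⟩
      obtain ⟨z, hz⟩ := h.denom y hy
      have e : 2 ^ (k + 1) * x = s * w + 2 * z := by
        apply ι_inj
        rw [map_add, ← hz, map_mul, map_mul, ← hm, hx, smul_eq]
        simp only [map_pow, map_ofNat]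
        ring
      have hd : (2 : S) ∣ s * w :=
        ⟨2 ^ k * x - z, by linear_combination -e⟩
      obtain ⟨t, rfl⟩ := (two_prime.dvd_or_dvd hd).resolve_right hw
      refine ⟨t, x - t * v, ?_, by ring⟩
      rw [← h.mem_iff]
      have e2 : ι (x - t * v) = y - t • (ι v - 2 * m) := by
        rw [map_sub, hx, smul_eq, smul_eq]
        simp only [map_mul, map_ofNat]
        ring
      rw [e2]
      exact sub_mem hy (Submodule.smul_mem _ _ hv)
    · rintro ⟨t, y, hy, rfl⟩
      refine ⟨2 * t, ι y + t • (ι v - 2 * m),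
        add_mem ((h.mem_iff y).mpr hy) (Submodule.smul_mem _ _ hv), ?_⟩
      rw [smul_eq, smul_eq]
      simp only [map_mul, map_ofNat, map_add]
      ring
  denom y hy := by
    obtain ⟨s, n, hn, rfl⟩ := Submodule.mem_span_insert.mp hy
    obtain ⟨z, hz⟩ := h.denom n hn
    refine ⟨s * w + 2 * z, ?_⟩
    rw [smul_eq]
    simp only [map_mul, map_ofNat, map_add] at hz ⊢
    linear_combination 2 * hz + 2 * ι s * hm

/-- **Lemma (miSameAsvi).**  For `1 ≤ i ≤ 5`, `Mᵢ ∩ S = Iᵢ`: an element of `S` lies in the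
`S`-submodule of `S[1/2]` generated by `2, m₁, …, m_{i−1}` if and only if it lies in the
ideal `(2, v₁, …, v_{i−1})` of `S`. -/
theorem M_inter_S_eq_I
    (γ : S2 ≃+* S2)
    (hγr1 : γ (ι r1) = ι s1) (hγs1 : γ (ι s1) = -ι r1)
    (hγr3 : γ (ι r3) = ι s3) (hγs3 : γ (ι s3) = -ι r3)
    (m1 m2 m3 m4 : S2)
    (hγ2m1 : γ (γ m1) = -m1) (hγ2m2 : γ (γ m2) = -m2)
    (hγ2m3 : γ (γ m3) = -m3) (hγ2m4 : γ (γ m4) = -m4)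
    (hlog1 : m1 - γ m1 = ι r1)
    (hlog2 : m2 - γ m2 = γ m1 * ι r1 ^ 2 + ι r3)
    (hlog3 : m3 - γ m3 = γ m2 * ι r1 ^ 4 + γ m1 * ι r3 ^ 2)
    (hlog4 : m4 - γ m4 = γ m3 * ι r1 ^ 8 + γ m2 * ι r3 ^ 4)
    (v1 v2 v3 v4 : S)
    (h2s1 : 2 * m1 = 4 * m1 + ι v1)
    (h2s2 : 2 * m2 = 16 * m2 + m1 * ι v1 ^ 2 + ι v2)
    (h2s3 : 2 * m3 = 2 ^ 8 * m3 + m2 * ι v1 ^ 4 + m1 * ι v2 ^ 2 + ι v3)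
    (h2s4 : 2 * m4 = 2 ^ 16 * m4 + m3 * ι v1 ^ 8 + m2 * ι v2 ^ 4 + m1 * ι v3 ^ 2 + ι v4)
    : (∀ x : S, ι x ∈ Submodule.span S ({2} : Set S2) ↔ x ∈ Ideal.span ({2} : Set S)) ∧
      (∀ x : S, ι x ∈ Submodule.span S ({2, m1} : Set S2) ↔ x ∈ Ideal.span ({2, v1} : Set S)) ∧
      (∀ x : S, ι x ∈ Submodule.span S ({2, m1, m2} : Set S2) ↔
        x ∈ Ideal.span ({2, v1, v2} : Set S)) ∧
      (∀ x : S, ι x ∈ Submodule.span S ({2, m1, m2, m3} : Set S2) ↔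
        x ∈ Ideal.span ({2, v1, v2, v3} : Set S)) ∧
      (∀ x : S, ι x ∈ Submodule.span S ({2, m1, m2, m3, m4} : Set S2) ↔
        x ∈ Ideal.span ({2, v1, v2, v3, v4} : Set S)) := by
  -- `wₖ = 2ᵏ mₖ` and `uₖ = 2ᵏ γ mₖ`, obtained by clearing denominators in `2 mₖ = aₖ + γ aₖ`
  -- and `γ mₖ = mₖ - aₖ`.
  obtain ⟨w1, hw1⟩ : ∃ w : S, w = r1 + s1 := ⟨_, rfl⟩
  obtain ⟨u1, hu1⟩ : ∃ u : S, u = s1 - r1 := ⟨_, rfl⟩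
  obtain ⟨w2, hw2⟩ : ∃ w : S, w = 2 * (r3 + s3) + u1 * r1 ^ 2 - w1 * s1 ^ 2 := ⟨_, rfl⟩
  obtain ⟨u2, hu2⟩ : ∃ u : S, u = w2 - 2 * u1 * r1 ^ 2 - 4 * r3 := ⟨_, rfl⟩
  obtain ⟨w3, hw3⟩ : ∃ w : S, w = u2 * r1 ^ 4 + 2 * u1 * r3 ^ 2 - w2 * s1 ^ 4 - 2 * w1 * s3 ^ 2 :=
    ⟨_, rfl⟩
  obtain ⟨u3, hu3⟩ : ∃ u : S, u = w3 - 2 * u2 * r1 ^ 4 - 4 * u1 * r3 ^ 2 := ⟨_, rfl⟩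
  obtain ⟨w4, hw4⟩ : ∃ w : S, w = u3 * r1 ^ 8 + 2 * u2 * r3 ^ 4 - w3 * s1 ^ 8 - 2 * w2 * s3 ^ 4 :=
    ⟨_, rfl⟩
  have g1 := congrArg γ hlog1
  have g2 := congrArg γ hlog2
  have g3 := congrArg γ hlog3
  have g4 := congrArg γ hlog4
  simp only [map_sub, map_add, map_mul, map_pow, hγ2m1, hγ2m2, hγ2m3, hγ2m4, hγr1, hγr3]
    at g1 g2 g3 g4
  have e1 : 2 ^ (0 + 1) * m1 = ι w1 := by
    rw [hw1, map_add]; linear_combination hlog1 + g1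
  have f1 : 2 * γ m1 = ι u1 := by
    rw [hu1, map_sub]; linear_combination -hlog1 + g1
  have e2 : 2 ^ (1 + 1) * m2 = ι w2 := by
    rw [hw2]
    simp only [map_add, map_sub, map_mul, map_pow, map_ofNat, ← e1, ← f1]
    linear_combination 2 * hlog2 + 2 * g2
  have f2 : 4 * γ m2 = ι u2 := by
    rw [hu2]
    simp only [map_sub, map_mul, map_pow, map_ofNat, ← e2, ← f1]
    linear_combination -4 * hlog2
  have e3 : 2 ^ (2 + 1) * m3 = ι w3 := by
    rw [hw3]
    simp only [map_add, map_sub, map_mul, map_pow, map_ofNat, ← e1, ← f1, ← e2, ← f2]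
    linear_combination 4 * hlog3 + 4 * g3
  have f3 : 8 * γ m3 = ι u3 := by
    rw [hu3]
    simp only [map_sub, map_mul, map_pow, map_ofNat, ← e3, ← f1, ← f2]
    linear_combination -8 * hlog3
  have e4 : 2 ^ (3 + 1) * m4 = ι w4 := by
    rw [hw4]
    simp only [map_add, map_sub, map_mul, map_pow, map_ofNat, ← e2, ← f2, ← e3, ← f3]
    linear_combination 8 * hlog4 + 8 * g4
  have n1 : ¬ (2 : S) ∣ r1 - s1 := fun h => not_dvd_e (by
    have : r1 + s1 = (r1 - s1) + 2 * s1 := by ring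
    rw [this]; exact dvd_add h (Dvd.intro _ rfl))
  have n2 := not_dvd_double n1
  have n4 := not_dvd_double n2
  have n8 := not_dvd_double n4
  have d1 : ¬ (2 : S) ∣ w1 := hw1 ▸ not_dvd_e
  have d2 : ¬ (2 : S) ∣ w2 := not_dvd_step d1 n2 (r3 + s3 - r1 * r1 ^ 2) (by
    rw [hw2, hu1, hw1]; ring)
  have d3 : ¬ (2 : S) ∣ w3 := not_dvd_step d2 n4
    (u1 * r3 ^ 2 - w1 * s3 ^ 2 - (u1 * r1 ^ 2 + 2 * r3) * r1 ^ 4) (by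
    rw [hw3, hu2]; ring)
  have d4 : ¬ (2 : S) ∣ w4 := not_dvd_step d3 n8
    (u2 * r3 ^ 4 - w2 * s3 ^ 4 - (u2 * r1 ^ 4 + 2 * u1 * r3 ^ 2) * r1 ^ 8) (by
    rw [hw4, hu3]; ring)
  have G1 := Good.base
  have G2 : Good 2 (Submodule.span S {m1, 2}) (Ideal.span {v1, 2}) := G1.step e1 d1 (by
    have : ι v1 - 2 * m1 = (-w1) • (2 : S2) := by
      rw [smul_eq, map_neg, ← e1]; linear_combination -h2s1
    rw [this]
    exact Submodule.smul_mem _ _ (Submodule.subset_span (by simp)))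
  have G3 : Good 3 (Submodule.span S {m2, m1, 2}) (Ideal.span {v2, v1, 2}) := G2.step e2 d2 (by
    have : ι v2 - 2 * m2 = (-2 * w2) • (2 : S2) - (v1 ^ 2) • m1 := by
      simp only [smul_eq, map_mul, map_neg, map_pow, map_ofNat, ← e2]
      linear_combination -h2s2
    rw [this]
    exact sub_mem (Submodule.smul_mem _ _ (Submodule.subset_span (by simp)))
      (Submodule.smul_mem _ _ (Submodule.subset_span (by simp))))
  have G4 : Good 4 (Submodule.span S {m3, m2, m1, 2}) (Ideal.span {v3, v2, v1, 2}) :=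
    G3.step e3 d3 (by
    have : ι v3 - 2 * m3 = (-2 ^ 4 * w3) • (2 : S2) - (v2 ^ 2) • m1 - (v1 ^ 4) • m2 := by
      simp only [smul_eq, map_mul, map_neg, map_pow, map_ofNat, ← e3]
      linear_combination -h2s3
    rw [this]
    exact sub_mem (sub_mem (Submodule.smul_mem _ _ (Submodule.subset_span (by simp)))
      (Submodule.smul_mem _ _ (Submodule.subset_span (by simp))))
      (Submodule.smul_mem _ _ (Submodule.subset_span (by simp))))
  have G5 : Good 5 (Submodule.span S {m4, m3, m2, m1, 2}) (Ideal.span {v4, v3, v2, v1, 2}) :=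
    G4.step e4 d4 (by
    have : ι v4 - 2 * m4 = (-2 ^ 11 * w4) • (2 : S2) - (v3 ^ 2) • m1 - (v2 ^ 4) • m2
        - (v1 ^ 8) • m3 := by
      simp only [smul_eq, map_mul, map_neg, map_pow, map_ofNat, ← e4]
      linear_combination -h2s4
    rw [this]
    exact sub_mem (sub_mem (sub_mem (Submodule.smul_mem _ _ (Submodule.subset_span (by simp)))
      (Submodule.smul_mem _ _ (Submodule.subset_span (by simp))))
      (Submodule.smul_mem _ _ (Submodule.subset_span (by simp))))
      (Submodule.smul_mem _ _ (Submodule.subset_span (by simp))))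
  have p2 {T : Type} (a b : T) : ({a, b} : Set T) = {b, a} := Set.pair_comm a b
  have p3 {T : Type} (a b c : T) : ({a, b, c} : Set T) = {c, b, a} := by
    ext; simp only [Set.mem_insert_iff, Set.mem_singleton_iff]; tauto
  have p4 {T : Type} (a b c d : T) : ({a, b, c, d} : Set T) = {d, c, b, a} := by
    ext; simp only [Set.mem_insert_iff, Set.mem_singleton_iff]; tauto
  have p5 {T : Type} (a b c d e : T) : ({a, b, c, d, e} : Set T) = {e, d, c, b, a} := by
    ext; simp only [Set.mem_insert_iff, Set.mem_singleton_iff]; tauto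
  refine ⟨G1.mem_iff, ?_, ?_, ?_, ?_⟩
  · rw [p2 2 m1, p2 2 v1]; exact G2.mem_iff
  · rw [p3 2 m1, p3 2 v1]; exact G3.mem_iff
  · rw [p4 2 m1, p4 2 v1]; exact G4.mem_iff
  · rw [p5 2 m1, p5 2 v1]; exact G5.mem_iff
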